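/- arXiv:1101.2718 — 2 statements merged into one kernel-verified Lean document; each statement's English description precedes it below -/
import Mathlib

section
/- Let Δ be a finite simplicial complex and let τ be an involution on Δ whose fixed point set Δ^τ is itself a simplicial complex (i.e., Δ^τ is closed under taking nonempty subsets). Then the nim-value of subset take-away on Δ equals the nim-value of subset take-away on Δ^τ: g(Δ) = g(Δ^τ). -/
/-!
The equality `g(Δ) = g(Δ^τ)` is proved by induction on the size of `Δ`, with a mirror strategy.
Choosing a fixed face `σ` leaves a `τ`-invariant position whose fixed faces are those left after
choosing `σ` in `Δ^τ`, so by induction such moves realise exactly the values of the options of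
`Δ^τ`. After choosing a face `σ` that is not fixed, the face `τ(σ)` is still available, and
choosing it gives a smaller `τ`-invariant position with the same fixed faces, because no fixed face
contains `σ`. Hence the position after `σ` has an option of value `g(Δ^τ)`, and its own value
differs from `g(Δ^τ)`. So `g(Δ^τ)` is the minimal excludant of the values of the options of `Δ`.

The induction is carried by `grundy_eq_grundy_fixed_aux`, for families of sets that need not be
simplicial complexes: the only assumptions are invariance and that members of the family contained
in fixed members are fixed, which pass to every invariant subfamily.
-/

attribute [local instance] Classical.propDecidable

/-- The minimal excludant of a finite set of naturals. -/
noncomputable def mex (s : Finset ℕ) : ℕ := sInf {n : ℕ | n ∉ s}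

/-- The position resulting from choosing `σ` in subset take-away:
remove `σ` together with every element containing it. -/
noncomputable def takeawayMove {V : Type*} [DecidableEq V] (Δ : Finset (Finset V))
    (σ : Finset V) : Finset (Finset V) :=
  Δ.filter (fun t => ¬ σ ⊆ t)

/-- The Grundy (nim-)value of subset take-away played on `Δ`: the minimal excludant of the
Grundy values of all positions reachable in one move. -/
noncomputable def grundy {V : Type*} [DecidableEq V] (Δ : Finset (Finset V)) : ℕ :=
  mex (Δ.attach.image (fun σ => grundy (takeawayMove Δ σ.1)))
termination_by Δ.card
decreasing_by
  simp only [takeawayMove]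
  exact Finset.card_lt_card (Finset.filter_ssubset.mpr ⟨σ.1, σ.2, by simp⟩)

lemma mex_notMem (s : Finset ℕ) : mex s ∉ s :=
  Nat.sInf_mem (s := {n : ℕ | n ∉ s}) (Infinite.exists_notMem_finset s)

lemma mem_of_lt_mex {s : Finset ℕ} {m : ℕ} (h : m < mex s) : m ∈ s := by
  by_contra hm
  exact Nat.notMem_of_lt_sInf h hm

lemma grundy_takeawayMove_ne {V : Type*} [DecidableEq V] {Δ : Finset (Finset V)} {σ : Finset V}
    (hσ : σ ∈ Δ) : grundy (takeawayMove Δ σ) ≠ grundy Δ := by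
  intro h
  rw [grundy.eq_1 Δ] at h
  refine mex_notMem (Δ.attach.image (fun σ => grundy (takeawayMove Δ σ.1))) ?_
  rw [← h]
  exact Finset.mem_image.mpr ⟨⟨σ, hσ⟩, Finset.mem_attach _ _, rfl⟩

lemma exists_grundy_takeawayMove_eq {V : Type*} [DecidableEq V] {Δ : Finset (Finset V)} {m : ℕ}
    (h : m < grundy Δ) : ∃ σ ∈ Δ, grundy (takeawayMove Δ σ) = m := by
  rw [grundy.eq_1 Δ] at h
  obtain ⟨σ, -, hσ⟩ := Finset.mem_image.mp (mem_of_lt_mex h)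
  exact ⟨σ.1, σ.2, hσ⟩

lemma mem_takeawayMove {V : Type*} [DecidableEq V] {Δ : Finset (Finset V)} {σ t : Finset V} :
    t ∈ takeawayMove Δ σ ↔ t ∈ Δ ∧ ¬ σ ⊆ t := by
  simp [takeawayMove]

lemma card_takeawayMove_lt {V : Type*} [DecidableEq V] {Δ : Finset (Finset V)} {σ : Finset V}
    (hσ : σ ∈ Δ) : (takeawayMove Δ σ).card < Δ.card :=
  Finset.card_lt_card (Finset.filter_ssubset.mpr ⟨σ, hσ, by simp⟩)

/-- The form of the result suited to induction: `hfix` asks only that members of `Δ` contained in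
fixed members of `Δ` are fixed, a condition inherited by subfamilies. -/
lemma grundy_eq_grundy_fixed_aux {V : Type*} [DecidableEq V] (τ : Equiv.Perm V)
    (hτ2 : τ ^ 2 = 1) (n : ℕ) (Δ : Finset (Finset V)) (hn : Δ.card = n)
    (hτΔ : ∀ σ ∈ Δ, σ.image (τ : V → V) ∈ Δ)
    (hfix : ∀ t ∈ Δ, t.image (τ : V → V) = t → ∀ s ∈ Δ, s ⊆ t → s.image (τ : V → V) = s) :
    grundy Δ = grundy (Δ.filter (fun σ => σ.image (τ : V → V) = σ)) := by
  induction n using Nat.strong_induction_on generalizing Δ with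
  | _ n ih =>
  subst hn
  have hinv : ∀ s : Finset V, (s.image (τ : V → V)).image (τ : V → V) = s := by
    intro s
    have h : (τ : V → V) ∘ τ = id := by
      funext x
      simpa [sq] using congrArg (fun p : Equiv.Perm V => p x) hτ2
    rw [Finset.image_image, h, Finset.image_id]
  have hsub : ∀ s t : Finset V, s ⊆ t.image (τ : V → V) ↔ s.image (τ : V → V) ⊆ t := by
    intro s t
    constructor
    · intro h
      simpa only [hinv] using Finset.image_subset_image (f := (τ : V → V)) h
    · intro h
      simpa only [hinv] using Finset.image_subset_image (f := (τ : V → V)) h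
  have hfixed : ∀ σ ∈ Δ, σ.image (τ : V → V) = σ → grundy (takeawayMove Δ σ) =
      grundy (takeawayMove (Δ.filter (fun σ => σ.image (τ : V → V) = σ)) σ) := by
    intro σ hσ hσf
    rw [ih _ (card_takeawayMove_lt hσ) (takeawayMove Δ σ) rfl]
    · congr 1
      ext t
      simp only [mem_takeawayMove, Finset.mem_filter]
      tauto
    · intro t ht
      rw [mem_takeawayMove] at ht ⊢
      rw [hsub, hσf]
      exact ⟨hτΔ t ht.1, ht.2⟩
    · intro t ht htf s hs
      exact hfix t (mem_takeawayMove.mp ht).1 htf s (mem_takeawayMove.mp hs).1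
  have hmoved : ∀ σ ∈ Δ, σ.image (τ : V → V) ≠ σ → grundy (takeawayMove Δ σ) ≠
      grundy (Δ.filter (fun σ => σ.image (τ : V → V) = σ)) := by
    intro σ hσ hσf
    -- `σ` and `τ(σ)` are distinct of equal size, so choosing `σ` does not remove `τ(σ)`.
    have hmem : σ.image (τ : V → V) ∈ takeawayMove Δ σ := by
      refine mem_takeawayMove.mpr ⟨hτΔ σ hσ, fun h => hσf ?_⟩
      exact (Finset.eq_of_subset_of_card_le h Finset.card_image_le).symm
    have key : grundy (takeawayMove (takeawayMove Δ σ) (σ.image (τ : V → V))) =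
        grundy (Δ.filter (fun σ => σ.image (τ : V → V) = σ)) := by
      rw [ih _ ((card_takeawayMove_lt hmem).trans (card_takeawayMove_lt hσ)) _ rfl]
      · congr 1
        ext t
        simp only [mem_takeawayMove, Finset.mem_filter]
        constructor
        · tauto
        · rintro ⟨ht, htf⟩
          have h1 : ¬ σ ⊆ t := fun h => hσf (hfix t ht htf σ hσ h)
          refine ⟨⟨⟨ht, h1⟩, ?_⟩, htf⟩
          rwa [← hsub, htf]
      · intro t ht
        simp only [mem_takeawayMove] at ht ⊢
        rw [hsub, hsub, hinv]
        exact ⟨⟨hτΔ t ht.1.1, ht.2⟩, ht.1.2⟩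
      · intro t ht htf s hs
        simp only [mem_takeawayMove] at ht hs
        exact hfix t ht.1.1 htf s hs.1.1
    rw [← key]
    exact (grundy_takeawayMove_ne hmem).symm
  rcases lt_trichotomy (grundy Δ)
    (grundy (Δ.filter (fun σ => σ.image (τ : V → V) = σ))) with h | h | h
  · obtain ⟨σ, hσ, he⟩ := exists_grundy_takeawayMove_eq h
    obtain ⟨hσΔ, hσf⟩ := Finset.mem_filter.mp hσ
    rw [← hfixed σ hσΔ hσf] at he
    exact absurd he (grundy_takeawayMove_ne hσΔ)
  · exact h
  · obtain ⟨σ, hσ, he⟩ := exists_grundy_takeawayMove_eq h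
    by_cases hσf : σ.image (τ : V → V) = σ
    · rw [hfixed σ hσ hσf] at he
      exact absurd he (grundy_takeawayMove_ne (Finset.mem_filter.mpr ⟨hσ, hσf⟩))
    · exact absurd he (hmoved σ hσ hσf)

/-- If `Δ` is a finite simplicial complex and `τ` an involution on `Δ`
whose fixed point set is itself a simplicial complex (closed under taking nonempty subsets),
then the nim-value of subset take-away on `Δ` equals that on the fixed point set. -/
theorem grundy_eq_grundy_fixedPoints {V : Type*} [DecidableEq V] (Δ : Finset (Finset V))
    (τ : Equiv.Perm V)
    (hnonempty : ∀ σ ∈ Δ, σ.Nonempty)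
    (hdown : ∀ σ ∈ Δ, ∀ t ⊆ σ, t.Nonempty → t ∈ Δ)
    (hτ2 : τ ^ 2 = 1)
    (hτΔ : ∀ σ ∈ Δ, σ.image (τ : V → V) ∈ Δ)
    (hfix : ∀ σ ∈ Δ.filter (fun σ => σ.image (τ : V → V) = σ), ∀ t ⊆ σ, t.Nonempty →
      t ∈ Δ.filter (fun σ => σ.image (τ : V → V) = σ)) :
    grundy Δ = grundy (Δ.filter (fun σ => σ.image (τ : V → V) = σ)) := by
  refine grundy_eq_grundy_fixed_aux τ hτ2 _ Δ rfl hτΔ ?_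
  intro t ht htf s hs hst
  exact (Finset.mem_filter.mp
    (hfix t (Finset.mem_filter.mpr ⟨ht, htf⟩) s hst (hnonempty s hs))).2
end

section
/- Let G be a finite simple bipartite graph with v(G) vertices and e(G) edges. Then the nim-value of graph chomp on G is determined by the parities of v(G) and e(G): g(G) = 0 if v(G) and e(G) are both even, g(G) = 1 if v(G) is odd and e(G) is even, g(G) = 2 if v(G) is even and e(G) is odd, and g(G) = 3 if v(G) and e(G) are both odd. Equivalently, g(G) = (v(G) mod 2) + 2·(e(G) mod 2). -/
/-!
Write `a` and `b` for the parities of the numbers of vertices and edges of a position. Deleting an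
edge flips `b`; deleting a vertex flips `a` and changes `b` by the parity of its degree. So no move
preserves the value `a + 2 * b`, and it remains to reach every smaller value:

* if `b = 1`, deleting any edge lowers the value by `2`;
* if `a = 1`, the degree sum is even while the number of vertices is odd, so some vertex has even
  degree (`exists_even_deg`), and deleting it lowers the value by `1`;
* if `b = 1`, the degrees on one side of the bipartition add up to the number of edges, so some
  vertex has odd degree (`exists_odd_deg`); deleting it moves from `2` to `1` and from `3` to `0`.

The induction runs over complexes of singletons and two-coloured pairs (`BipComplex`), a class
closed under the moves, with the colouring fixed throughout.
-/

attribute [local instance] Classical.propDecidable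

/-- The simplicial complex of vertices and edges of a finite simple graph `G`.
Graph chomp on `G` is subset take-away on this complex, so the nim-value of graph chomp
on `G` is `grundy (graphComplex G)`. -/
noncomputable def graphComplex {V : Type*} [Fintype V] [DecidableEq V] (G : SimpleGraph V) :
    Finset (Finset V) :=
  (Finset.univ : Finset V).image (fun v => ({v} : Finset V)) ∪
    Finset.univ.filter (fun s : Finset V => ∃ u v, G.Adj u v ∧ s = {u, v})

/-- `Δ` is the complex of vertices and edges of a graph on some subset of `V` for which `c` is a
proper 2-colouring: it consists of singletons and of pairs that contain exactly one element of
colour `true` and whose elements are vertices of `Δ`. -/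
def BipComplex {V : Type*} [DecidableEq V] (c : V → Bool) (Δ : Finset (Finset V)) : Prop :=
  ∀ s ∈ Δ, s.card = 1 ∨
    (s.card = 2 ∧ (∀ v ∈ s, {v} ∈ Δ) ∧ (s.filter (fun v => c v = true)).card = 1)

/-- The members of `Δ` with `k` elements: the vertices for `k = 1`, the edges for `k = 2`. -/
noncomputable def layer {V : Type*} (Δ : Finset (Finset V)) (k : ℕ) : Finset (Finset V) :=
  Δ.filter (fun s => s.card = k)

/-- The degree of `v`: the number of two-element members of `Δ` containing `v`. -/
noncomputable def deg {V : Type*} [DecidableEq V] (Δ : Finset (Finset V)) (v : V) : ℕ :=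
  ((layer Δ 2).filter (fun s => v ∈ s)).card

/-- The vertices of `Δ`, as elements of `V` rather than as singletons. -/
noncomputable def verts {V : Type*} [Fintype V] (Δ : Finset (Finset V)) : Finset V :=
  Finset.univ.filter (fun v => {v} ∈ Δ)

theorem mex_eq {s : Finset ℕ} {n : ℕ} (h : n ∉ s) (h' : ∀ m < n, m ∈ s) : mex s = n := by
  unfold mex
  apply le_antisymm
  · exact Nat.sInf_le h
  · by_contra hlt
    push Not at hlt
    exact Nat.sInf_mem (s := {n : ℕ | n ∉ s}) ⟨n, h⟩ (h' _ hlt)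

section

variable {V : Type*} [DecidableEq V] {c : V → Bool} {Δ : Finset (Finset V)}

theorem BipComplex.move (h : BipComplex c Δ) (σ : Finset V) :
    BipComplex c (takeawayMove Δ σ) := by
  intro s hs
  simp only [takeawayMove, Finset.mem_filter] at hs ⊢
  rcases h s hs.1 with h1 | ⟨h2, h3, h4⟩
  · exact Or.inl h1
  · exact Or.inr ⟨h2, fun v hv => ⟨h3 v hv, fun hsub =>
      hs.2 (hsub.trans (Finset.singleton_subset_iff.2 hv))⟩, h4⟩

theorem layer_two_move_edge {σ : Finset V} (hσ : σ ∈ layer Δ 2) :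
    (layer (takeawayMove Δ σ) 2).card + 1 = (layer Δ 2).card := by
  have : layer (takeawayMove Δ σ) 2 = (layer Δ 2).erase σ := by
    ext t
    simp only [layer, takeawayMove, Finset.mem_filter, Finset.mem_erase] at hσ ⊢
    constructor
    · rintro ⟨⟨h1, h2⟩, h3⟩
      exact ⟨fun e => h2 (e ▸ subset_rfl), h1, h3⟩
    · rintro ⟨h1, h2, h3⟩
      exact ⟨⟨h2, fun hs => h1 (Finset.eq_of_subset_of_card_le hs (by omega)).symm⟩, h3⟩
  rw [this, Finset.card_erase_add_one hσ]

theorem layer_one_move_edge {σ : Finset V} (hσ : σ ∈ layer Δ 2) :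
    layer (takeawayMove Δ σ) 1 = layer Δ 1 := by
  ext t
  simp only [layer, takeawayMove, Finset.mem_filter] at hσ ⊢
  constructor
  · rintro ⟨⟨h1, h2⟩, h3⟩
    exact ⟨h1, h3⟩
  · rintro ⟨h1, h3⟩
    refine ⟨⟨h1, fun hs => ?_⟩, h3⟩
    have := Finset.card_le_card hs
    omega

theorem layer_two_move_vertex (v : V) :
    (layer (takeawayMove Δ {v}) 2).card + deg Δ v = (layer Δ 2).card := by
  have : layer (takeawayMove Δ {v}) 2 = (layer Δ 2).filter (fun s => ¬ v ∈ s) := by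
    ext t
    simp only [layer, takeawayMove, Finset.mem_filter, Finset.singleton_subset_iff]
    tauto
  rw [this, deg, add_comm]
  exact Finset.card_filter_add_card_filter_not _

theorem layer_one_move_vertex {v : V} (hv : {v} ∈ Δ) :
    (layer (takeawayMove Δ {v}) 1).card + 1 = (layer Δ 1).card := by
  have hv' : {v} ∈ layer Δ 1 := by simp [layer, hv]
  have : layer (takeawayMove Δ {v}) 1 = (layer Δ 1).erase {v} := by
    ext t
    simp only [layer, takeawayMove, Finset.mem_filter, Finset.mem_erase]
    constructor
    · rintro ⟨⟨h1, h2⟩, h3⟩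
      exact ⟨fun e => h2 (e ▸ subset_rfl), h1, h3⟩
    · rintro ⟨h1, h2, h3⟩
      exact ⟨⟨h2, fun hs => h1 (Finset.eq_of_subset_of_card_le hs (by simp [h3])).symm⟩, h3⟩
  rw [this, Finset.card_erase_add_one hv']

variable [Fintype V]

theorem card_verts : (verts Δ).card = (layer Δ 1).card := by
  have : layer Δ 1 = (verts Δ).image (fun v => {v}) := by
    ext t
    simp only [layer, verts, Finset.mem_filter, Finset.mem_image, Finset.mem_univ, true_and,
      Finset.card_eq_one]
    constructor
    · rintro ⟨h, v, rfl⟩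
      exact ⟨v, h, rfl⟩
    · rintro ⟨v, h, rfl⟩
      exact ⟨h, v, rfl⟩
  rw [this, Finset.card_image_of_injective _ Finset.singleton_injective]

/-- Double counting of incidences between a set of vertices and the edges. -/
theorem sum_deg (S : Finset V) :
    ∑ v ∈ S, deg Δ v = ∑ s ∈ layer Δ 2, (S.filter (fun v => v ∈ s)).card := by
  simp only [deg]
  exact Finset.sum_card_bipartiteAbove_eq_sum_card_bipartiteBelow
    (fun (v : V) (s : Finset V) => v ∈ s)

theorem sum_deg_verts (h : BipComplex c Δ) :
    ∑ v ∈ verts Δ, deg Δ v = (layer Δ 2).card * 2 := by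
  rw [sum_deg]
  refine Finset.sum_const_nat fun s hs => ?_
  simp only [layer, Finset.mem_filter] at hs
  rcases h s hs.1 with h1 | ⟨h2, h3, h4⟩
  · omega
  · rw [← h2]
    congr 1
    ext v
    simp only [verts, Finset.mem_filter, Finset.mem_univ, true_and]
    exact ⟨fun x => x.2, fun x => ⟨h3 v x, x⟩⟩

theorem sum_deg_side (h : BipComplex c Δ) :
    ∑ v ∈ (verts Δ).filter (fun v => c v = true), deg Δ v = (layer Δ 2).card := by
  rw [sum_deg, Finset.card_eq_sum_ones]
  refine Finset.sum_congr rfl fun s hs => ?_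
  simp only [layer, Finset.mem_filter] at hs
  rcases h s hs.1 with h1 | ⟨h2, h3, h4⟩
  · omega
  · rw [← h4]
    congr 1
    ext v
    simp only [verts, Finset.mem_filter, Finset.mem_univ, true_and]
    exact ⟨fun x => ⟨x.2, x.1.2⟩, fun x => ⟨⟨h3 v x.1, x.2⟩, x.1⟩⟩

theorem exists_even_deg (h : BipComplex c Δ) (hodd : (layer Δ 1).card % 2 = 1) :
    ∃ v, {v} ∈ Δ ∧ deg Δ v % 2 = 0 := by
  by_contra hne
  push Not at hne
  have h1 : 2 ∣ ∑ v ∈ verts Δ, (deg Δ v + 1) := by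
    refine Finset.dvd_sum fun v hv => ?_
    have := hne v (by simpa [verts] using hv)
    omega
  rw [Finset.sum_add_distrib, sum_deg_verts h, ← Finset.card_eq_sum_ones, card_verts] at h1
  omega

theorem exists_odd_deg (h : BipComplex c Δ) (hodd : (layer Δ 2).card % 2 = 1) :
    ∃ v, {v} ∈ Δ ∧ deg Δ v % 2 = 1 := by
  by_contra hne
  push Not at hne
  have h1 : 2 ∣ ∑ v ∈ (verts Δ).filter (fun v => c v = true), deg Δ v := by
    refine Finset.dvd_sum fun v hv => ?_
    have := hne v (by simpa [verts] using (Finset.mem_filter.1 hv).1)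
    omega
  rw [sum_deg_side h] at h1
  omega

theorem grundy_bipComplex (n : ℕ) : ∀ Δ : Finset (Finset V), Δ.card = n → BipComplex c Δ →
    grundy Δ = (layer Δ 1).card % 2 + 2 * ((layer Δ 2).card % 2) := by
  induction n using Nat.strong_induction_on with
  | _ n ih =>
  intro Δ hn h
  have hmove : ∀ σ ∈ Δ, grundy (takeawayMove Δ σ) =
      (layer (takeawayMove Δ σ) 1).card % 2 + 2 * ((layer (takeawayMove Δ σ) 2).card % 2) := by
    intro σ hσ
    refine ih _ ?_ _ rfl (h.move σ)
    rw [← hn]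
    exact Finset.card_lt_card (Finset.filter_ssubset.mpr ⟨σ, hσ, by simp⟩)
  have hmem : ∀ m, m ∈ Δ.attach.image (fun σ => grundy (takeawayMove Δ σ.1)) ↔
      ∃ σ ∈ Δ, grundy (takeawayMove Δ σ) = m := by
    intro m
    simp
  have hedge : ∀ σ ∈ layer Δ 2, grundy (takeawayMove Δ σ) =
      (layer Δ 1).card % 2 + 2 * (((layer Δ 2).card + 1) % 2) := by
    intro σ hσ
    rw [hmove σ (Finset.mem_filter.1 hσ).1, layer_one_move_edge hσ]
    have := layer_two_move_edge hσ
    omega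
  have hvert : ∀ v, {v} ∈ Δ → grundy (takeawayMove Δ {v}) =
      ((layer Δ 1).card + 1) % 2 + 2 * (((layer Δ 2).card + deg Δ v) % 2) := by
    intro v hv
    rw [hmove _ hv]
    have h1 := layer_two_move_vertex (Δ := Δ) v
    have h2 := layer_one_move_vertex hv
    omega
  rw [grundy]
  apply mex_eq
  · rw [hmem]
    rintro ⟨σ, hσ, he⟩
    rcases h σ hσ with h1 | ⟨h2, -, -⟩
    · obtain ⟨v, rfl⟩ := Finset.card_eq_one.1 h1
      rw [hvert v hσ] at he
      omega
    · rw [hedge σ (Finset.mem_filter.2 ⟨hσ, h2⟩)] at he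
      omega
  · intro m hm
    rw [hmem]
    -- The target `m` differs from the current value in the vertex parity, the edge parity, or both.
    by_cases hv : m % 2 = (layer Δ 1).card % 2
    · have hpos : 0 < (layer Δ 2).card := by
        by_contra h0
        omega
      obtain ⟨σ, hσ⟩ := Finset.card_pos.1 hpos
      refine ⟨σ, (Finset.mem_filter.1 hσ).1, ?_⟩
      rw [hedge σ hσ]
      omega
    · by_cases he : m / 2 = (layer Δ 2).card % 2
      · obtain ⟨v, hvΔ, hd⟩ := exists_even_deg h (by omega)
        refine ⟨{v}, hvΔ, ?_⟩
        rw [hvert v hvΔ]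
        omega
      · obtain ⟨v, hvΔ, hd⟩ := exists_odd_deg h (by omega)
        refine ⟨{v}, hvΔ, ?_⟩
        rw [hvert v hvΔ]
        omega

end

/-- The nim-value of graph chomp on a finite simple bipartite graph `G` is
`(v(G) mod 2) + 2 * (e(G) mod 2)`, i.e. it is `0, 1, 2, 3` according to the parities of the
numbers of vertices and edges. -/
theorem grundy_bipartite {V : Type*} [Fintype V] [DecidableEq V] (G : SimpleGraph V)
    [DecidableRel G.Adj] (hbip : G.Colorable 2) :
    grundy (graphComplex G) = Fintype.card V % 2 + 2 * (G.edgeFinset.card % 2) := by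
  obtain ⟨C⟩ := hbip
  have hsing : ∀ v : V, {v} ∈ graphComplex G := fun v => by simp [graphComplex]
  have hcomplex : BipComplex (fun v => decide (C v = 0)) (graphComplex G) := by
    intro s hs
    simp only [graphComplex, Finset.mem_union, Finset.mem_image, Finset.mem_univ, true_and,
      Finset.mem_filter] at hs
    rcases hs with ⟨v, rfl⟩ | ⟨u, v, huv, rfl⟩
    · simp
    · refine Or.inr ⟨Finset.card_pair huv.ne, fun w _ => hsing w, ?_⟩
      have hC := C.valid huv
      rw [Finset.filter_insert, Finset.filter_singleton]
      by_cases hu : C u = 0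
      · have hv : C v ≠ 0 := fun hv => hC (hu.trans hv.symm)
        simp [hu, hv]
      · have hv : C v = 0 := by omega
        simp [hu, hv]
  rw [grundy_bipComplex _ _ rfl hcomplex, ← card_verts]
  have hverts : verts (graphComplex G) = Finset.univ := by
    ext v
    simp [verts, hsing]
  have hedges : layer (graphComplex G) 2 = G.edgeFinset.image Sym2.toFinset := by
    ext s
    simp only [layer, graphComplex, Finset.mem_union, Finset.mem_image, Finset.mem_univ, true_and,
      Finset.mem_filter, SimpleGraph.mem_edgeFinset]
    constructor
    · rintro ⟨⟨v, rfl⟩ | ⟨u, v, huv, rfl⟩, h2⟩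
      · simp at h2
      · exact ⟨s(u, v), huv, Sym2.toFinset_mk_eq⟩
    · rintro ⟨e, he, rfl⟩
      induction e with
      | _ u v =>
        rw [SimpleGraph.mem_edgeSet] at he
        rw [Sym2.toFinset_mk_eq]
        exact ⟨Or.inr ⟨u, v, he, rfl⟩, Finset.card_pair he.ne⟩
  have hinj : Function.Injective (Sym2.toFinset : Sym2 V → Finset V) := by
    intro a b hab
    ext x
    rw [← Sym2.mem_toFinset, hab, Sym2.mem_toFinset]
  rw [hverts, hedges, Finset.card_image_of_injective _ hinj, Finset.card_univ]
end
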